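/- For i = 1,…,p let σ̂_i be the smallest singular value of F(λ̂_i) = Σ_{j=1}^k f_j(λ̂_i) F_j and let v̂_i be an associated right singular vector (unit vector with ‖F(λ̂_i) v̂_i‖₂ = σ̂_i). With V = [v̂_1, …, v̂_p] and p̂ the rank of G ⊙^T V^T, there exist perturbations δF_1, …, δF_k ∈ ℂ^{n×n} with Σ_{j=1}^k f_j(λ̂_i)(F_j + δF_j) v̂_i = 0 for all i and ‖[δF_1, …, δF_k]‖_F ≤ σ_p̂(G ⊙^T V^T)^{−1} √(Σ_{i=1}^p σ̂_i²) ≤ σ_p̂(G ⊙^T V^T)^{−1} √p · max_{i=1,…,p} σ̂_i. Consequently the eigenvalue backward error η satisfies η ≤ σ_p̂(G ⊙^T V^T)^{−1} √p · max_i σ̂_i. -/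

import Mathlib

open Matrix Kronecker BigOperators

noncomputable section

/-- Frobenius norm of a complex matrix. -/
def fnorm {ι κ : Type*} [Fintype ι] [Fintype κ] (A : Matrix ι κ ℂ) : ℝ :=
  Real.sqrt (∑ i, ∑ j, ‖A i j‖ ^ 2)

/-- Euclidean norm of a complex vector. -/
def vnorm {ι : Type*} [Fintype ι] (v : ι → ℂ) : ℝ :=
  Real.sqrt (∑ i, ‖v i‖ ^ 2)

/-- The four Moore–Penrose conditions. -/
def IsMoorePenrose {ι κ : Type*} [Fintype ι] [Fintype κ]
    (A : Matrix ι κ ℂ) (B : Matrix κ ι ℂ) : Prop :=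
  A * B * A = A ∧ B * A * B = B ∧ (A * B)ᴴ = A * B ∧ (B * A)ᴴ = B * A

open scoped Classical in
/-- The Moore–Penrose pseudoinverse (defined by choice; it always exists and is unique). -/
noncomputable def pinv {ι κ : Type*} [Fintype ι] [Fintype κ] (A : Matrix ι κ ℂ) :
    Matrix κ ι ℂ :=
  if h : ∃ B, IsMoorePenrose A B then h.choose else 0

/-- `s` is a singular value of `A`: `s ≥ 0` and `s²` is an eigenvalue of `Aᴴ A`. -/
def IsSingularValue {ι κ : Type*} [Fintype ι] [Fintype κ] (A : Matrix ι κ ℂ) (s : ℝ) : Prop :=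
  0 ≤ s ∧ ∃ w : κ → ℂ, w ≠ 0 ∧ (Aᴴ * A).mulVec w = ((s : ℂ) ^ 2) • w

/-- The smallest nonzero singular value of `A`, i.e. `σ_p̂(A)` where `p̂ = rank A`. -/
noncomputable def sigmaMinPos {ι κ : Type*} [Fintype ι] [Fintype κ] (A : Matrix ι κ ℂ) : ℝ :=
  sInf {s : ℝ | IsSingularValue A s ∧ 0 < s}

/-- The smallest singular value of a square matrix `A`, the minimum of `‖A v‖₂` over
unit vectors `v`. -/
noncomputable def sigmaMinSq {n : ℕ} (A : Matrix (Fin n) (Fin n) ℂ) : ℝ :=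
  sInf {x : ℝ | ∃ w : Fin n → ℂ, vnorm w = 1 ∧ x = vnorm (A.mulVec w)}

/-- The transposed Khatri–Rao product `G ⊙^T W` of `G : p × k` and `W : p × n`:
the `p × kn` matrix whose `i`-th row is `[G i 1 • (row i of W), …, G i k • (row i of W)]`. -/
def krt {p k n : ℕ} (G : Matrix (Fin p) (Fin k) ℂ) (W : Matrix (Fin p) (Fin n) ℂ) :
    Matrix (Fin p) (Fin k × Fin n) ℂ :=
  Matrix.of fun i jl => G i jl.1 * W i jl.2

/-! Put `A = G ⊙ᵀ Vᵀ`. Transposed, the equations `∑ⱼ f_j(λ̂ᵢ) (Fⱼ + δFⱼ) v̂ᵢ = 0` form the linear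
system `A [δF₁, …, δFₖ]ᵀ = -A [F₁, …, Fₖ]ᵀ`, and row `i` of the right-hand side is `-F(λ̂ᵢ) v̂ᵢ`, of
norm `σ̂ᵢ`. The system has the solution `δFⱼ = -Fⱼ`. Projecting the columns of this solution onto
`(ker A)ᗮ` gives another one, whose Frobenius norm is at most `σ_p̂(A)⁻¹` times that of the
right-hand side, because `σ_p̂(A) ‖y‖ ≤ ‖A y‖` on `(ker A)ᗮ`. -/

section SingularValues

open Module

variable {𝕜 E H : Type*} [RCLike 𝕜]
  [NormedAddCommGroup E] [InnerProductSpace 𝕜 E] [FiniteDimensional 𝕜 E]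
  [NormedAddCommGroup H] [InnerProductSpace 𝕜 H] [FiniteDimensional 𝕜 H]

theorem norm_apply_sq_eq_sum_singularValues_sq_mul (T : E →ₗ[𝕜] H) (x : E) :
    ‖T x‖ ^ 2 = ∑ i : Fin (finrank 𝕜 E), T.singularValues i ^ 2 *
      ‖inner 𝕜 (T.isSymmetric_adjoint_comp_self.eigenvectorBasis rfl i) x‖ ^ 2 := by
  set hT := T.isSymmetric_adjoint_comp_self
  set b := hT.eigenvectorBasis rfl
  have hb (i) : inner 𝕜 (b i) ((T.adjoint ∘ₗ T) x) =
      (T.singularValues i ^ 2 : ℝ) * inner 𝕜 (b i) x := by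
    rw [← hT, hT.apply_eigenvectorBasis, inner_smul_left, T.sq_singularValues_fin rfl,
      RCLike.conj_ofReal]
  calc ‖T x‖ ^ 2 = RCLike.re (inner 𝕜 x ((T.adjoint ∘ₗ T) x)) := by
        rw [LinearMap.comp_apply, LinearMap.adjoint_inner_right, inner_self_eq_norm_sq]
    _ = RCLike.re (∑ i, inner 𝕜 x (b i) * inner 𝕜 (b i) ((T.adjoint ∘ₗ T) x)) := by
        rw [b.sum_inner_mul_inner]
    _ = _ := by
        rw [map_sum]
        refine Finset.sum_congr rfl fun i _ => ?_
        rw [hb, mul_left_comm, RCLike.re_ofReal_mul, inner_mul_symm_re_eq_norm, norm_mul,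
          norm_inner_symm, ← pow_two]

theorem singularValues_mul_norm_le_norm_apply (T : E →ₗ[𝕜] H) {x : E} (hx : x ∈ T.kerᗮ) :
    T.singularValues (finrank 𝕜 T.range - 1) * ‖x‖ ≤ ‖T x‖ := by
  set b := T.isSymmetric_adjoint_comp_self.eigenvectorBasis rfl
  refine le_of_sq_le_sq ?_ (norm_nonneg _)
  rw [mul_pow, ← b.sum_sq_norm_inner_right x, norm_apply_sq_eq_sum_singularValues_sq_mul,
    Finset.mul_sum]
  refine Finset.sum_le_sum fun i _ => ?_
  rcases lt_or_ge (i : ℕ) (finrank 𝕜 T.range) with hi | hi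
  · gcongr
    · exact T.singularValues_nonneg _
    · exact T.singularValues_antitone (Nat.le_sub_one_of_lt hi)
  · have hbi : b i ∈ T.ker := by
      rw [← T.ker_adjoint_comp_self, LinearMap.mem_ker,
        T.isSymmetric_adjoint_comp_self.apply_eigenvectorBasis, ← T.sq_singularValues_fin,
        T.singularValues_eq_zero_iff_le_finrank_range.2 hi]
      simp
    rw [Submodule.inner_right_of_mem_orthogonal hbi hx, norm_zero, zero_pow two_ne_zero, mul_zero]
    positivity

theorem exists_apply_eq_norm_le_inv_singularValues_mul (T : E →ₗ[𝕜] H) (x : E) :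
    ∃ y, T y = T x ∧ ‖y‖ ≤ (T.singularValues (finrank 𝕜 T.range - 1))⁻¹ * ‖T x‖ := by
  rcases eq_or_ne T 0 with rfl | hT
  · exact ⟨0, by simp⟩
  have hpos : 0 < T.singularValues (finrank 𝕜 T.range - 1) := by
    rw [T.singularValues_pos_iff_lt_finrank_range]
    exact Nat.sub_one_lt (by simpa [LinearMap.range_eq_bot] using hT)
  have hy : T (T.kerᗮ.starProjection x) = T x := by
    have := T.kerᗮ.sub_starProjection_mem_orthogonal x
    rw [Submodule.orthogonal_orthogonal, LinearMap.mem_ker, map_sub, sub_eq_zero] at this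
    exact this.symm
  refine ⟨T.kerᗮ.starProjection x, hy, ?_⟩
  rw [le_inv_mul_iff₀ hpos, ← hy]
  exact singularValues_mul_norm_le_norm_apply T (Submodule.starProjection_apply_mem _ x)

theorem hasEigenvalue_adjoint_comp_self_sq_iff (T : E →ₗ[𝕜] H) {s : ℝ} (hs : 0 < s) :
    End.HasEigenvalue (T.adjoint ∘ₗ T) ((s : 𝕜) ^ 2) ↔
      ∃ i < finrank 𝕜 T.range, T.singularValues i = s := by
  constructor
  · intro h
    obtain ⟨i, hi⟩ := T.isSymmetric_adjoint_comp_self.exists_eigenvalues_eq rfl h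
    have his : T.singularValues i = s := by
      rw [← T.sq_singularValues_fin rfl] at hi
      exact (pow_left_inj₀ (T.singularValues_nonneg _) hs.le two_ne_zero).1 (by exact_mod_cast hi)
    exact ⟨i, T.singularValues_pos_iff_lt_finrank_range.1 (his ▸ hs), his⟩
  · rintro ⟨i, hi, rfl⟩
    exact T.hasEigenvalue_adjoint_comp_self_sq_singularValues
      (hi.trans_le T.finrank_range_le)

end SingularValues

section Matrix

variable {ι κ μ : Type*} [Fintype ι] [Fintype κ] [Fintype μ]

theorem isSingularValue_iff_hasEigenvalue [DecidableEq κ] (A : Matrix ι κ ℂ) {s : ℝ} :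
    IsSingularValue A s ↔ 0 ≤ s ∧
      Module.End.HasEigenvalue (A.toEuclideanLin.adjoint ∘ₗ A.toEuclideanLin) ((s : ℂ) ^ 2) := by
  classical
  refine and_congr_right fun _ => ⟨?_, fun h => ?_⟩
  · rintro ⟨w, hw, h⟩
    refine Module.End.hasEigenvalue_of_hasEigenvector (x := WithLp.toLp 2 w)
      ⟨Module.End.mem_eigenspace_iff.2 ?_, by simpa using hw⟩
    rw [← toEuclideanLin_conjTranspose_eq_adjoint, ← toLpLin_mul, toLpLin_toLp, toLin'_apply, h,
      WithLp.toLp_smul]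
  · obtain ⟨w, hw, hw0⟩ := h.exists_hasEigenvector
    refine ⟨w.ofLp, by simpa using hw0, ?_⟩
    rw [Module.End.mem_eigenspace_iff, ← toEuclideanLin_conjTranspose_eq_adjoint,
      ← toLpLin_mul] at hw
    exact congrArg WithLp.ofLp hw

-- For `A = 0` both sides are `0`: the left is `sInf ∅`, and `0 - 1 = 0` on the right.
theorem sigmaMinPos_eq_singularValues [DecidableEq κ] (A : Matrix ι κ ℂ) :
    sigmaMinPos A =
      A.toEuclideanLin.singularValues (Module.finrank ℂ A.toEuclideanLin.range - 1) := by
  set T := A.toEuclideanLin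
  have hset : {s : ℝ | IsSingularValue A s ∧ 0 < s} =
      T.singularValues '' Set.Iio (Module.finrank ℂ T.range) := by
    ext s
    constructor
    · rintro ⟨h, hs⟩
      exact (hasEigenvalue_adjoint_comp_self_sq_iff T hs).1
        ((isSingularValue_iff_hasEigenvalue A).1 h).2
    · rintro ⟨i, hi, rfl⟩
      have hs := T.singularValues_pos_iff_lt_finrank_range.2 hi
      exact ⟨(isSingularValue_iff_hasEigenvalue A).2
        ⟨hs.le, (hasEigenvalue_adjoint_comp_self_sq_iff T hs).2 ⟨i, hi, rfl⟩⟩, hs⟩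
  rw [sigmaMinPos, hset]
  rcases Nat.eq_zero_or_pos (Module.finrank ℂ T.range) with h0 | hpos
  · rw [h0, T.singularValues_eq_zero_iff_le_finrank_range.2 (by omega)]
    simp
  · refine IsLeast.csInf_eq ⟨⟨_, Nat.sub_one_lt hpos.ne', rfl⟩, ?_⟩
    rintro _ ⟨i, hi, rfl⟩
    exact T.singularValues_antitone (Nat.le_sub_one_of_lt hi)

theorem vnorm_eq_norm_toLp (v : ι → ℂ) : vnorm v = ‖WithLp.toLp 2 v‖ :=
  (EuclideanSpace.norm_eq _).symm

theorem vnorm_nonneg (v : ι → ℂ) : 0 ≤ vnorm v := Real.sqrt_nonneg _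

theorem exists_mulVec_eq_vnorm_le (A : Matrix ι κ ℂ) (x : κ → ℂ) :
    ∃ d, A *ᵥ d = A *ᵥ x ∧ vnorm d ≤ (sigmaMinPos A)⁻¹ * vnorm (A *ᵥ x) := by
  classical
  obtain ⟨y, hy, hle⟩ :=
    exists_apply_eq_norm_le_inv_singularValues_mul A.toEuclideanLin (WithLp.toLp 2 x)
  refine ⟨y.ofLp, congrArg WithLp.ofLp hy, ?_⟩
  rwa [vnorm_eq_norm_toLp, vnorm_eq_norm_toLp, sigmaMinPos_eq_singularValues]

theorem vnorm_sq_eq_sum (v : ι → ℂ) : vnorm v ^ 2 = ∑ i, ‖v i‖ ^ 2 :=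
  Real.sq_sqrt (by positivity)

theorem fnorm_sq_eq_sum_vnorm_sq_row (A : Matrix ι κ ℂ) :
    fnorm A ^ 2 = ∑ i, vnorm (A.row i) ^ 2 := by
  simp only [vnorm_sq_eq_sum, row_apply]
  exact Real.sq_sqrt (by positivity)

theorem fnorm_transpose (A : Matrix ι κ ℂ) : fnorm Aᵀ = fnorm A :=
  congrArg Real.sqrt Finset.sum_comm

theorem fnorm_neg (A : Matrix ι κ ℂ) : fnorm (-A) = fnorm A := by
  simp [fnorm]

theorem fnorm_nonneg (A : Matrix ι κ ℂ) : 0 ≤ fnorm A := Real.sqrt_nonneg _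

theorem sigmaMinPos_nonneg (A : Matrix ι κ ℂ) : 0 ≤ sigmaMinPos A :=
  Real.sInf_nonneg fun _ h => h.2.le

theorem exists_mul_eq_fnorm_le (A : Matrix ι κ ℂ) (X : Matrix κ μ ℂ) :
    ∃ D : Matrix κ μ ℂ, A * D = A * X ∧ fnorm D ≤ (sigmaMinPos A)⁻¹ * fnorm (A * X) := by
  choose d hd hle using fun m => exists_mulVec_eq_vnorm_le A (Xᵀ m)
  refine ⟨(of d)ᵀ, Matrix.ext fun i m => congrFun (hd m) i, ?_⟩
  refine le_of_sq_le_sq ?_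
    (mul_nonneg (inv_nonneg.2 (sigmaMinPos_nonneg A)) (fnorm_nonneg _))
  rw [fnorm_transpose, ← fnorm_transpose (A * X), mul_pow, fnorm_sq_eq_sum_vnorm_sq_row,
    fnorm_sq_eq_sum_vnorm_sq_row, Finset.mul_sum]
  refine Finset.sum_le_sum fun m _ => ?_
  rw [← mul_pow]
  exact pow_le_pow_left₀ (vnorm_nonneg _) (hle m) 2

end Matrix

theorem sqrt_sum_sq_le_sqrt_card_mul_iSup {ι : Type*} [Fintype ι] {s : ι → ℝ}
    (hs : ∀ i, 0 ≤ s i) : √(∑ i, s i ^ 2) ≤ √(Fintype.card ι) * ⨆ i, s i := by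
  have hle (i) : s i ≤ ⨆ i, s i := le_ciSup (Set.finite_range s).bddAbove i
  rw [← Real.sqrt_sq (Real.iSup_nonneg hs), ← Real.sqrt_mul (by positivity)]
  refine Real.sqrt_le_sqrt ?_
  rw [← nsmul_eq_mul, ← Finset.card_univ]
  exact Finset.sum_le_card_nsmul _ _ _ fun i _ => pow_le_pow_left₀ (hs i) (hle i) 2

section BackwardError

variable {m : Type*} {p k n : ℕ}

/-- The block row `[F₁, …, Fₖ]`, with columns indexed compatibly with `krt`. -/
def blockRow (F : Fin k → Matrix m (Fin n) ℂ) : Matrix m (Fin k × Fin n) ℂ :=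
  of fun a jl => F jl.1 a jl.2

theorem krt_mul_blockRow_transpose_apply (G : Matrix (Fin p) (Fin k) ℂ)
    (W : Matrix (Fin p) (Fin n) ℂ) (F : Fin k → Matrix m (Fin n) ℂ) (i : Fin p) :
    (krt G W * (blockRow F)ᵀ).row i = ∑ j, G i j • (F j *ᵥ W i) := by
  funext a
  simp only [row_apply, mul_apply, krt, blockRow, transpose_apply, of_apply, Fintype.sum_prod_type,
    Finset.sum_apply, Pi.smul_apply, smul_eq_mul, mulVec, dotProduct, Finset.mul_sum]
  exact Finset.sum_congr rfl fun j _ => Finset.sum_congr rfl fun l _ => by ring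

variable [Fintype m]

/-- The eigenvalue backward error `η` of approximate eigenvalues `λ̂₁, …, λ̂ₚ`, as an infimum over
the admissible perturbations; the `λ̂ᵢ` enter only through the values `G i j = f_j(λ̂ᵢ)`. -/
def eigenvalueBackwardError (F : Fin k → Matrix m (Fin n) ℂ) (G : Matrix (Fin p) (Fin k) ℂ) : ℝ :=
  sInf {x : ℝ | ∃ (δF : Fin k → Matrix m (Fin n) ℂ) (w : Fin p → Fin n → ℂ),
    (∀ i, w i ≠ 0) ∧ (∀ i, ∑ j, G i j • ((F j + δF j) *ᵥ w i) = 0) ∧ x = fnorm (blockRow δF)}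

theorem exists_perturbation_fnorm_le (F : Fin k → Matrix m (Fin n) ℂ)
    (G : Matrix (Fin p) (Fin k) ℂ) (W : Matrix (Fin p) (Fin n) ℂ) :
    ∃ δF : Fin k → Matrix m (Fin n) ℂ,
      (∀ i, ∑ j, G i j • ((F j + δF j) *ᵥ W i) = 0) ∧
      fnorm (blockRow δF) ≤
        (sigmaMinPos (krt G W))⁻¹ * √(∑ i, vnorm ((∑ j, G i j • F j) *ᵥ W i) ^ 2) := by
  obtain ⟨D, hD, hle⟩ := exists_mul_eq_fnorm_le (krt G W) (blockRow F)ᵀ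
  let δF : Fin k → Matrix m (Fin n) ℂ := fun j => -of fun a l => D (j, l) a
  have hδF : blockRow δF = -Dᵀ := rfl
  have hadd : blockRow (fun j => F j + δF j) = blockRow F + blockRow δF := rfl
  have hres : fnorm (krt G W * (blockRow F)ᵀ) =
      √(∑ i, vnorm ((∑ j, G i j • F j) *ᵥ W i) ^ 2) := by
    rw [← Real.sqrt_sq (fnorm_nonneg _), fnorm_sq_eq_sum_vnorm_sq_row]
    simp only [krt_mul_blockRow_transpose_apply, sum_mulVec, smul_mulVec]
  refine ⟨δF, fun i => ?_, ?_⟩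
  · rw [← krt_mul_blockRow_transpose_apply, hadd, hδF, transpose_add, transpose_neg,
      transpose_transpose, Matrix.mul_add, Matrix.mul_neg, hD, add_neg_cancel]
    rfl
  · rwa [hδF, fnorm_neg, fnorm_transpose, ← hres]

theorem eigenvalueBackwardError_le_fnorm {F δF : Fin k → Matrix m (Fin n) ℂ}
    {G : Matrix (Fin p) (Fin k) ℂ} {w : Fin p → Fin n → ℂ} (hw : ∀ i, w i ≠ 0)
    (h : ∀ i, ∑ j, G i j • ((F j + δF j) *ᵥ w i) = 0) :
    eigenvalueBackwardError F G ≤ fnorm (blockRow δF) :=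
  csInf_le ⟨0, by rintro _ ⟨_, _, _, _, rfl⟩; exact fnorm_nonneg _⟩ ⟨δF, w, hw, h, rfl⟩

theorem eigenvalue_backward_error_upper_bound_general (F : Fin k → Matrix m (Fin n) ℂ)
    (G : Matrix (Fin p) (Fin k) ℂ) (W : Matrix (Fin p) (Fin n) ℂ) (hW : ∀ i, W i ≠ 0)
    (r : Fin p → ℝ) (hr : ∀ i, vnorm ((∑ j, G i j • F j) *ᵥ W i) = r i) :
    (∃ δF : Fin k → Matrix m (Fin n) ℂ,
      (∀ i, ∑ j, G i j • ((F j + δF j) *ᵥ W i) = 0) ∧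
      fnorm (blockRow δF) ≤ (sigmaMinPos (krt G W))⁻¹ * √(∑ i, r i ^ 2) ∧
      √(∑ i, r i ^ 2) ≤ √p * ⨆ i, r i) ∧
    eigenvalueBackwardError F G ≤ (sigmaMinPos (krt G W))⁻¹ * (√p * ⨆ i, r i) := by
  obtain ⟨δF, hδF, hle⟩ := exists_perturbation_fnorm_le F G W
  simp only [hr] at hle
  have hmax : √(∑ i, r i ^ 2) ≤ √p * ⨆ i, r i := by
    simpa using sqrt_sum_sq_le_sqrt_card_mul_iSup fun i => (vnorm_nonneg _).trans_eq (hr i)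
  refine ⟨⟨δF, hδF, hle, hmax⟩, ?_⟩
  calc eigenvalueBackwardError F G ≤ fnorm (blockRow δF) := eigenvalueBackwardError_le_fnorm hW hδF
    _ ≤ (sigmaMinPos (krt G W))⁻¹ * √(∑ i, r i ^ 2) := hle
    _ ≤ (sigmaMinPos (krt G W))⁻¹ * (√p * ⨆ i, r i) :=
      mul_le_mul_of_nonneg_left hmax (inv_nonneg.2 (sigmaMinPos_nonneg _))

end BackwardError

theorem ne_zero_of_vnorm_eq_one {ι : Type*} [Fintype ι] {v : ι → ℂ} (hv : vnorm v = 1) :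
    v ≠ 0 := by
  rintro rfl
  simp [vnorm] at hv

/-- Upper bound for the eigenvalue backward error: taking for `v̂ᵢ` right singular vectors of
`F(λ̂ᵢ)` associated with its smallest singular value `σ̂ᵢ`, there exist perturbations `δFⱼ`
making all the `(λ̂ᵢ, v̂ᵢ)` exact eigenpairs with
`‖[δF₁, …, δFₖ]‖_F ≤ σ_p̂(G ⊙ᵀ Vᵀ)⁻¹ √(∑ᵢ σ̂ᵢ²) ≤ σ_p̂(G ⊙ᵀ Vᵀ)⁻¹ √p · maxᵢ σ̂ᵢ`;
consequently the eigenvalue backward error satisfies `η ≤ σ_p̂(G ⊙ᵀ Vᵀ)⁻¹ √p · maxᵢ σ̂ᵢ`. -/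
theorem eigenvalue_backward_error_upper_bound (n k p : ℕ) (hp : 0 < p)
    (F : Fin k → Matrix (Fin n) (Fin n) ℂ)
    (f : Fin k → ℂ → ℂ) (lam : Fin p → ℂ)
    (sig : Fin p → ℝ)
    (hsig : ∀ i, sig i = sigmaMinSq (∑ j, f j (lam i) • F j))
    (v : Fin p → Fin n → ℂ)
    (hv : ∀ i, vnorm (v i) = 1)
    (hsv : ∀ i, vnorm ((∑ j, f j (lam i) • F j).mulVec (v i)) = sig i)
    (G : Matrix (Fin p) (Fin k) ℂ) (hG : ∀ i j, G i j = f j (lam i))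
    (W : Matrix (Fin p) (Fin n) ℂ) (hW : ∀ i l, W i l = v i l) :
    (∃ δF : Fin k → Matrix (Fin n) (Fin n) ℂ,
      (∀ i, ∑ j, f j (lam i) • ((F j + δF j).mulVec (v i)) = 0) ∧
      fnorm (Matrix.of fun (m : Fin n) (jl : Fin k × Fin n) => δF jl.1 m jl.2) ≤
        (sigmaMinPos (krt G W))⁻¹ * Real.sqrt (∑ i, sig i ^ 2) ∧
      Real.sqrt (∑ i, sig i ^ 2) ≤ Real.sqrt p * ⨆ i, sig i) ∧
    sInf {x : ℝ | ∃ (δF : Fin k → Matrix (Fin n) (Fin n) ℂ) (w : Fin p → Fin n → ℂ),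
        (∀ i, w i ≠ 0) ∧
        (∀ i, ∑ j, f j (lam i) • ((F j + δF j).mulVec (w i)) = 0) ∧
        x = fnorm (Matrix.of fun (m : Fin n) (jl : Fin k × Fin n) => δF jl.1 m jl.2)}
      ≤ (sigmaMinPos (krt G W))⁻¹ * (Real.sqrt p * ⨆ i, sig i) := by
  obtain ⟨rfl, rfl⟩ : G = of (fun i j => f j (lam i)) ∧ W = of v := ⟨Matrix.ext hG, Matrix.ext hW⟩
  exact eigenvalue_backward_error_upper_bound_general F _ _
    (fun i => ne_zero_of_vnorm_eq_one (hv i)) sig hsv
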